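/- arXiv:2404.04832 — 6 statements merged into one kernel-verified Lean document; each statement's English description precedes it below -/
import Mathlib

section
/- Fix a real constant D > 0 and reals n_h, n_v with n_h ≥ 4, n_v ≥ 4, n_h ≤ (3/2)·n_v and n_v ≤ (3/2)·n_h. Then the derivative of the map α ↦ l̄(n_h, n_v, α) is strictly negative at α = 0 and strictly positive at α = 1; consequently the minimum of l̄(n_h, n_v, ·) over the interval [0, 1] is attained at some interior point α* ∈ (0, 1). -/
/-- Average travel distance of a sorting task. -/
noncomputable def lbar (D nh nv α : ℝ) : ℝ :=
  2 * D * ((nh^2 + nv^2) / (nh + nv) * ((-α^4 - 5*α^2 + 18*α) / 12)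
    + nh * nv / (nh + nv) * ((-α^2 + 2*α) / 4)
    + (3*α^3 - α^2 - 3*α - 5) / (12 * (nh + nv))
    + (nh + nv) * ((α^2 - 2*α + 1) / 2)
    + (-α^2 + 2*α) / 2)

theorem lbar_hasDeriv (D nh nv x : ℝ) : HasDerivAt (fun α => lbar D nh nv α)
    (2 * D * ((nh^2 + nv^2) / (nh + nv) * ((-(4*x^3) - 10*x + 18) / 12)
    + nh * nv / (nh + nv) * ((-(2*x) + 2) / 4)
    + (9*x^2 - 2*x - 3) / (12 * (nh + nv))
    + (nh + nv) * ((2*x - 2) / 2)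
    + (-(2*x) + 2) / 2)) x := by
  have h1 := hasDerivAt_id' x
  have h2 := hasDerivAt_pow 2 x
  have h3 := hasDerivAt_pow 3 x
  have h4 := hasDerivAt_pow 4 x
  unfold lbar
  have := (((((((h4.neg.sub (h2.const_mul 5)).add (h1.const_mul 18)).div_const 12).const_mul
    ((nh^2 + nv^2) / (nh + nv))).add
    (((h2.neg.add (h1.const_mul 2)).div_const 4).const_mul (nh * nv / (nh + nv)))).add
    (((((h3.const_mul 3).sub h2).sub (h1.const_mul 3)).sub_const 5).div_const
      (12 * (nh + nv)))).add
    ((((h2.sub (h1.const_mul 2)).add_const 1).div_const 2).const_mul (nh + nv))).add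
    ((h2.neg.add (h1.const_mul 2)).div_const 2) |>.const_mul (2 * D)
  refine HasDerivAt.congr_deriv this ?_
  norm_num
  left
  ring

theorem key_ineq (a b : ℝ) (ha : 4 ≤ a) (hab : a ≤ b) (hb : b ≤ 3/2 * a) :
    (a^2 + b^2)/2 - 3/2*(a*b) + (a+b) - 1/4 < 0 := by
  nlinarith [mul_nonneg (sub_nonneg.2 hab) (sub_nonneg.2 hb),
    mul_nonneg (sub_nonneg.2 ha) (by linarith : 0 ≤ a + b)]

theorem lbar_interior_min
    (D nh nv : ℝ) (hD : 0 < D) (hnh : 4 ≤ nh) (hnv : 4 ≤ nv)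
    (hhv : nh ≤ (3/2) * nv) (hvh : nv ≤ (3/2) * nh) :
    deriv (fun α => lbar D nh nv α) 0 < 0 ∧
    0 < deriv (fun α => lbar D nh nv α) 1 ∧
    ∃ αstar ∈ Set.Ioo (0:ℝ) 1, ∀ α ∈ Set.Icc (0:ℝ) 1,
      lbar D nh nv αstar ≤ lbar D nh nv α := by
  have hS : 0 < nh + nv := by linarith
  have d0 : deriv (fun α => lbar D nh nv α) 0 < 0 := by
    rw [(lbar_hasDeriv D nh nv 0).deriv]
    have hk : (nh^2 + nv^2)/2 - 3/2*(nh*nv) + (nh+nv) - 1/4 < 0 := by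
      rcases le_total nh nv with h | h
      · exact key_ineq nh nv hnh h hvh
      · have := key_ineq nv nh hnv h hhv
        linarith
    have := mul_neg_of_pos_of_neg (by positivity : 0 < 2 * D / (nh + nv)) hk
    refine lt_of_eq_of_lt ?_ this
    field_simp
    ring
  have d1 : 0 < deriv (fun α => lbar D nh nv α) 1 := by
    rw [(lbar_hasDeriv D nh nv 1).deriv]
    have : 0 < 2 * D * ((nh^2 + nv^2) / (nh + nv) / 3 + 1 / (3 * (nh + nv))) := by positivity
    refine lt_of_lt_of_eq this ?_
    field_simp
    ring
  refine ⟨d0, d1, ?_⟩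
  have hd : Differentiable ℝ (fun α => lbar D nh nv α) :=
    fun x => (lbar_hasDeriv D nh nv x).differentiableAt
  obtain ⟨x, hx, hmin⟩ := isCompact_Icc.exists_isMinOn (Set.nonempty_Icc.2 zero_le_one)
    (hd.continuous.continuousOn (s := Set.Icc (0:ℝ) 1))
  refine ⟨x, ⟨lt_of_le_of_ne hx.1 ?_, lt_of_le_of_ne hx.2 ?_⟩, fun α hα => hmin hα⟩
  · rintro rfl
    have ht := (hd 0).hasDerivAt.tendsto_slope.eventually (gt_mem_nhds d0)
    have ht2 := ht.filter_mono (nhdsWithin_mono 0 (s := Set.Ioi 0) (fun y (hy : 0 < y) => ne_of_gt hy))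
    obtain ⟨y, hy, hy2⟩ := (ht2.and (Ioo_mem_nhdsGT (zero_lt_one (α := ℝ)))).exists
    have := hmin (Set.Ioo_subset_Icc_self hy2)
    simp only [Set.mem_setOf_eq] at this
    rw [slope_def_field] at hy
    have h2 : 0 ≤ (lbar D nh nv y - lbar D nh nv 0) / (y - 0) :=
      div_nonneg (by linarith) (by linarith [hy2.1])
    linarith
  · rintro rfl
    have ht := (hd 1).hasDerivAt.tendsto_slope.eventually (lt_mem_nhds d1)
    have ht2 := ht.filter_mono (nhdsWithin_mono 1 (s := Set.Iio 1) (fun y (hy : y < 1) => ne_of_lt hy))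
    obtain ⟨y, hy, hy2⟩ := (ht2.and (Ioo_mem_nhdsLT (zero_lt_one (α := ℝ)))).exists
    have := hmin (Set.Ioo_subset_Icc_self hy2)
    simp only [Set.mem_setOf_eq] at this
    rw [slope_def_field] at hy
    have h2 : (lbar D nh nv y - lbar D nh nv 1) / (y - 1) ≤ 0 :=
      div_nonpos_of_nonneg_of_nonpos (by linarith) (by linarith [hy2.2])
    linarith
end

section
/- Fix a real constant D > 0 and reals S > 0 and k with 1 ≤ k ≤ 2, such that √(S/k) ≥ 4. Then for every α ∈ (0, 1], l̄(√(k·S), √(S/k), α) ≥ l̄(√S, √S, α); that is, among aisle networks of fixed area with length-to-width ratio at most 2, the square-shaped network minimizes the average travel distance. -/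
theorem lbar_square_optimal
    (D S k : ℝ) (hD : 0 < D) (hS : 0 < S) (hk1 : 1 ≤ k) (hk2 : k ≤ 2)
    (hside : 4 ≤ Real.sqrt (S / k)) :
    ∀ α ∈ Set.Ioc (0:ℝ) 1,
      lbar D (Real.sqrt S) (Real.sqrt S) α ≤
        lbar D (Real.sqrt (k * S)) (Real.sqrt (S / k)) α := by
  intro α hα
  obtain ⟨h0, h1⟩ := hα
  have hk : 0 < k := by linarith
  have hq : 0 < Real.sqrt S := Real.sqrt_pos.mpr hS
  have hx : 0 < Real.sqrt (k * S) := Real.sqrt_pos.mpr (by positivity)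
  have hy : 0 < Real.sqrt (S / k) := by linarith
  have hxy : Real.sqrt (k * S) * Real.sqrt (S / k) = Real.sqrt S ^ 2 := by
    rw [← Real.sqrt_mul (by positivity), Real.sq_sqrt hS.le,
      show k * S * (S / k) = S ^ 2 by field_simp, Real.sqrt_sq hS.le]
  generalize Real.sqrt (k * S) = x at *
  generalize Real.sqrt (S / k) = y at *
  generalize Real.sqrt S = q at *
  have hs : 2 * q ≤ x + y := by
    nlinarith [sq_nonneg (x - y)]
  have hA : α ≤ (-α^4 - 5*α^2 + 18*α) / 12 := by
    have e1 : α^2 ≤ α := by nlinarith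
    have e2 : α^4 ≤ α := by nlinarith [sq_nonneg α]
    linarith
  have hB : (-α^2 + 2*α) / 4 ≤ α := by nlinarith
  have hC : 3*α^3 - α^2 - 3*α - 5 ≤ 0 := by
    have e1 : α^3 ≤ α := by nlinarith [mul_pos h0 h0]
    nlinarith
  have hE : 0 ≤ (α^2 - 2*α + 1) / 2 := by nlinarith [sq_nonneg (α - 1)]
  unfold lbar
  generalize (-α^4 - 5*α^2 + 18*α) / 12 = A at *
  generalize (-α^2 + 2*α) / 4 = B at *
  generalize 3*α^3 - α^2 - 3*α - 5 = C at *
  generalize (α^2 - 2*α + 1) / 2 = E at *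
  apply mul_le_mul_of_nonneg_left _ (by positivity)
  have hsq : x ^ 2 + y ^ 2 = (x + y) ^ 2 - 2 * q ^ 2 := by rw [← hxy]; ring
  rw [hsq, hxy]
  have hs0 : 0 < x + y := by positivity
  generalize x + y = s at *
  have key : ((s ^ 2 - 2 * q ^ 2) / s * A + q ^ 2 / s * B + C / (12 * s) + s * E)
      - ((q ^ 2 + q ^ 2) / (q + q) * A + q * q / (q + q) * B + C / (12 * (q + q)) + (q + q) * E)
      = (s - 2 * q) * (A + E + (q ^ 2 * (2 * A - B) - C / 12) / (s * (2 * q))) := by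
    field_simp
    ring
  have h2 : 0 ≤ (s - 2 * q) * (A + E + (q ^ 2 * (2 * A - B) - C / 12) / (s * (2 * q))) := by
    apply mul_nonneg (by linarith)
    have : 0 ≤ q ^ 2 * (2 * A - B) := mul_nonneg (by positivity) (by linarith)
    have : 0 ≤ (q ^ 2 * (2 * A - B) - C / 12) / (s * (2 * q)) :=
      div_nonneg (by linarith) (by positivity)
    linarith
  linarith
end

section
/- Fix a real constant D > 0. For every real n > 0 and every α ∈ [0, 1], l̄(n, n, α) ≤ 2D·(9n/8 + 1/2). In particular, for a square network the average travel distance of a sorting task never exceeds 2D·(9n/8 + 1/2). -/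
theorem lbar_square_upper_bound (D : ℝ) (hD : 0 < D) (n : ℝ) (hn : 0 < n) :
    ∀ α ∈ Set.Icc (0:ℝ) 1, lbar D n n α ≤ 2 * D * (9 * n / 8 + 1/2) := by
  intro α hα
  obtain ⟨h0, h1⟩ := hα
  unfold lbar
  apply mul_le_mul_of_nonneg_left _ (by positivity)
  have e1 : (n^2 + n^2) / (n + n) = n := by field_simp
  have e2 : n * n / (n + n) = n / 2 := by field_simp; norm_num
  rw [e1, e2]
  have h2 : α^2 ≤ 1 := by nlinarith
  have h3 : α^3 ≤ α := by nlinarith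
  have hc : (3*α^3 - α^2 - 3*α - 5) / (12 * (n + n)) ≤ 0 := by
    apply div_nonpos_of_nonpos_of_nonneg
    · nlinarith [sq_nonneg α]
    · positivity
  have q : 0 ≤ -2*α^3 - 2*α^2 + 9*α + 3 := by nlinarith
  have k : 0 ≤ n * ((1 - α) * (-2*α^3 - 2*α^2 + 9*α + 3)) :=
    mul_nonneg hn.le (mul_nonneg (by linarith) q)
  have hs : (-α^2 + 2*α) / 2 ≤ 1/2 := by nlinarith [sq_nonneg (α - 1)]
  linarith
end

section
/- Fix a real constant D > 0 and reals n_h, n_v ≥ 1. Then for every α ∈ [0, 1], l̄(n_h, n_v, α) > 0. -/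
theorem lbar_pos (D : ℝ) (hD : 0 < D) (nh nv : ℝ) (hnh : 1 ≤ nh) (hnv : 1 ≤ nv) :
    ∀ α ∈ Set.Icc (0:ℝ) 1, 0 < lbar D nh nv α := by
  rintro α ⟨h0, h1⟩
  have hs : 0 < nh + nv := by linarith
  have hQ : 0 ≤ 2*α - α^2 := by nlinarith
  have ha2 : α^2 ≤ 1 := by nlinarith
  have ha4 : α^4 ≤ α := by
    have := pow_le_pow_of_le_one h0 h1 (show 1 ≤ 4 by norm_num)
    simpa using this
  have ha2' : α^2 ≤ α := by nlinarith
  have ha3 : 0 ≤ α^3 := by positivity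
  have hP : 0 ≤ -α^4 - 5*α^2 + 18*α := by linarith
  have e1 : 2 ≤ nh^2 + nv^2 := by nlinarith
  have e2 : 1 ≤ nh * nv := by nlinarith
  have e3 : 4 ≤ (nh + nv)^2 := by nlinarith
  have e4 : 2 ≤ nh + nv := by linarith
  have k1 := mul_le_mul_of_nonneg_right e1 hP
  have k2 := mul_le_mul_of_nonneg_right e2 hQ
  have k3 := mul_le_mul_of_nonneg_right e3 (sq_nonneg (1 - α))
  have k4 := mul_le_mul_of_nonneg_right e4 hQ
  have key : 0 < (nh^2 + nv^2) * (-α^4 - 5*α^2 + 18*α) + 3 * ((nh*nv) * (2*α - α^2))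
      + (3*α^3 - α^2 - 3*α - 5) + 6 * ((nh+nv)^2 * (1-α)^2)
      + 6 * ((nh+nv) * (2*α - α^2)) := by
    have : 0 < 2 * (-α^4 - 5*α^2 + 18*α) + 3 * (1 * (2*α - α^2))
      + (3*α^3 - α^2 - 3*α - 5) + 6 * (4 * (1-α)^2)
      + 6 * (2 * (2*α - α^2)) := by
      ring_nf
      linarith
    linarith
  have heq : lbar D nh nv α = 2 * D * (((nh^2 + nv^2) * (-α^4 - 5*α^2 + 18*α)
      + 3 * ((nh*nv) * (2*α - α^2))
      + (3*α^3 - α^2 - 3*α - 5) + 6 * ((nh+nv)^2 * (1-α)^2)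
      + 6 * ((nh+nv) * (2*α - α^2))) / (12 * (nh + nv))) := by
    unfold lbar
    field_simp
    ring
  rw [heq]
  exact mul_pos (by linarith) (div_pos key (by linarith))
end

section
/- Fix a real constant D > 0 and reals n_h, n_v with n_h + n_v ≠ 0. The derivative of the map α ↦ l̄(n_h, n_v, α) at α = 0 equals 2D·[ 3(n_h² + n_v²)/(2(n_h + n_v)) + n_h·n_v/(2(n_h + n_v)) − 1/(4(n_h + n_v)) − (n_h + n_v) + 1 ]. Moreover, if in addition n_h ≥ 4, n_v ≥ 4, n_h ≤ (3/2)·n_v and n_v ≤ (3/2)·n_h, then this quantity is strictly negative; equivalently, under these hypotheses 2n_h² + 2n_v² − 6·n_h·n_v + 4(n_h + n_v) − 1 < 0. -/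
theorem lbar_aux (D nh nv : ℝ) (hsum : nh + nv ≠ 0) :
    HasDerivAt (fun α => lbar D nh nv α)
      (2 * D * (3 * (nh^2 + nv^2) / (2 * (nh + nv)) + nh * nv / (2 * (nh + nv))
        - 1 / (4 * (nh + nv)) - (nh + nv) + 1)) 0 := by
  have h1 : HasDerivAt (fun α : ℝ => α) 1 0 := hasDerivAt_id 0
  have h2 : HasDerivAt (fun α : ℝ => α^2) 0 0 := by simpa using hasDerivAt_pow 2 (0:ℝ)
  have h3 : HasDerivAt (fun α : ℝ => α^3) 0 0 := by simpa using hasDerivAt_pow 3 (0:ℝ)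
  have h4 : HasDerivAt (fun α : ℝ => α^4) 0 0 := by simpa using hasDerivAt_pow 4 (0:ℝ)
  have a := (((h4.neg.sub (h2.const_mul 5)).add (h1.const_mul 18)).div_const 12).const_mul
    ((nh^2 + nv^2) / (nh + nv))
  have b := ((h2.neg.add (h1.const_mul 2)).div_const 4).const_mul (nh * nv / (nh + nv))
  have c := ((((h3.const_mul 3).sub h2).sub (h1.const_mul 3)).sub_const 5).div_const
    (12 * (nh + nv))
  have d := (((h2.sub (h1.const_mul 2)).add_const 1).div_const 2).const_mul (nh + nv)
  have e := (h2.neg.add (h1.const_mul 2)).div_const 2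
  have f := ((((a.add b).add c).add d).add e).const_mul (2 * D)
  refine f.congr_deriv ?_
  field_simp
  ring

theorem ineq_aux (h v : ℝ) (h4 : 4 ≤ h) (hv : h ≤ v) (vh : v ≤ (3/2) * h) :
    2 * h^2 + 2 * v^2 - 6 * h * v + 4 * (h + v) - 1 < 0 := by
  nlinarith [mul_nonneg (sub_nonneg.2 hv) (sub_nonneg.2 vh),
    mul_nonneg (by linarith : 0 ≤ h + v) (sub_nonneg.2 h4)]

theorem lbar_deriv_at_zero
    (D nh nv : ℝ) (hD : 0 < D) (hsum : nh + nv ≠ 0) :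
    deriv (fun α => lbar D nh nv α) 0 =
      2 * D * (3 * (nh^2 + nv^2) / (2 * (nh + nv)) + nh * nv / (2 * (nh + nv))
        - 1 / (4 * (nh + nv)) - (nh + nv) + 1) ∧
    (4 ≤ nh → 4 ≤ nv → nh ≤ (3/2) * nv → nv ≤ (3/2) * nh →
      deriv (fun α => lbar D nh nv α) 0 < 0 ∧
      2 * nh^2 + 2 * nv^2 - 6 * nh * nv + 4 * (nh + nv) - 1 < 0) := by
  have hd := (lbar_aux D nh nv hsum).deriv
  refine ⟨hd, fun a b c d => ?_⟩
  have key : 2 * nh^2 + 2 * nv^2 - 6 * nh * nv + 4 * (nh + nv) - 1 < 0 := by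
    rcases le_total nh nv with h | h
    · exact ineq_aux nh nv a h d
    · have := ineq_aux nv nh b h c
      linarith
  refine ⟨?_, key⟩
  rw [hd]
  have hs : 0 < nh + nv := by linarith
  have e : 3 * (nh^2 + nv^2) / (2 * (nh + nv)) + nh * nv / (2 * (nh + nv))
        - 1 / (4 * (nh + nv)) - (nh + nv) + 1
      = (2 * nh^2 + 2 * nv^2 - 6 * nh * nv + 4 * (nh + nv) - 1) / (4 * (nh + nv)) := by
    field_simp
    ring
  rw [e]
  exact mul_neg_of_pos_of_neg (by linarith) (div_neg_of_neg_of_pos key (by linarith))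
end

section
/- Fix a real constant D > 0 and reals n_h, n_v > 0. The derivative of the map α ↦ l̄(n_h, n_v, α) at α = 1 equals 2D·(n_h² + n_v² + 1)/(3(n_h + n_v)), and in particular this derivative is strictly positive. -/
theorem lbar_deriv_at_one
    (D nh nv : ℝ) (hD : 0 < D) (hnh : 0 < nh) (hnv : 0 < nv) :
    deriv (fun α => lbar D nh nv α) 1 =
      2 * D * (nh^2 + nv^2 + 1) / (3 * (nh + nv)) ∧
    0 < deriv (fun α => lbar D nh nv α) 1 := by
  have hs : nh + nv ≠ 0 := by positivity
  have h1 : HasDerivAt (fun α : ℝ => α) 1 1 := hasDerivAt_id' 1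
  have h2 := h1.pow 2
  have h3 := h1.pow 3
  have h4 := h1.pow 4
  have hA := (((h4.neg.sub (h2.const_mul 5)).add (h1.const_mul 18)).div_const 12).const_mul
    ((nh^2 + nv^2) / (nh + nv))
  have hB := ((h2.neg.add (h1.const_mul 2)).div_const 4).const_mul (nh * nv / (nh + nv))
  have hC := ((((h3.const_mul 3).sub h2).sub (h1.const_mul 3)).sub_const 5).div_const
    (12 * (nh + nv))
  have hE := (((h2.sub (h1.const_mul 2)).add_const 1).div_const 2).const_mul (nh + nv)
  have hF := (h2.neg.add (h1.const_mul 2)).div_const 2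
  have key : HasDerivAt (fun α => lbar D nh nv α)
      (2 * D * (nh^2 + nv^2 + 1) / (3 * (nh + nv))) 1 := by
    have h := ((((hA.add hB).add hC).add hE).add hF).const_mul (2 * D)
    refine HasDerivAt.congr_deriv (f := fun α => lbar D nh nv α) h ?_
    norm_num
    field_simp
    ring
  rw [key.deriv]
  exact ⟨rfl, by positivity⟩
end
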